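/- arXiv:1003.4425 — 4 statements merged into one kernel-verified Lean document; each statement's English description precedes it below -/
import Mathlib

section
/- The matrices α and β belong to Γ and satisfy the identities β·αᵀ = 0, α·αᵀ = I, β·βᵀ = I, and αᵀ·α + βᵀ·β = I, where I is the identity matrix and ᵀ denotes transposition. -/
/-!
Through `θ`, think of column indices as points of `ℕ × ℕ`. Row `i` of `α` is the indicator of
the point `(i, 0)`, and row `i` of `β` is the indicator of the point directly above `θ i`. Hence
left multiplication by `α` or `β` just selects rows (`alphaM_mul`, `betaM_mul`), and the three
identities with right factors `αᵀ`, `βᵀ` reduce to equalities between points of `ℕ × ℕ`.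

Dually, left multiplication by a transpose places row `(θ i).1` or row `θ⁻¹ (θ i - (0, 1))` in
row `i`: `αᵀ` does so exactly when `θ i` lies in `ℕ × {0}`, and `βᵀ` exactly when it does not
(`transposeM_alphaM_mul`, `transposeM_betaM_mul`). These two cases partition `ℕ × ℕ`, which gives
`αᵀ·α + βᵀ·β = I`.
-/

/-- The set of entries `{A i j | i j : ℕ}` of an `ℕ × ℕ` matrix is finite. -/
def entriesFinite {k : Type*} [CommRing k] (A : ℕ → ℕ → k) : Prop :=
  (Set.range fun p : ℕ × ℕ => A p.1 p.2).Finite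

/-- Each row and each column of `A` has at most `n` non-zero entries. -/
def rowColBound {k : Type*} [CommRing k] (A : ℕ → ℕ → k) (n : ℕ) : Prop :=
  (∀ i, ∃ s : Finset ℕ, s.card ≤ n ∧ ∀ j, A i j ≠ 0 → j ∈ s) ∧
  (∀ j, ∃ s : Finset ℕ, s.card ≤ n ∧ ∀ i, A i j ≠ 0 → i ∈ s)

/-- Membership in the algebra `Γ` of the paper: finitely many distinct entries, and a
uniform bound `n_A` on the number of non-zero entries in each row and each column. -/
def memGamma {k : Type*} [CommRing k] (A : ℕ → ℕ → k) : Prop :=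
  entriesFinite A ∧ ∃ n, rowColBound A n

/-- Ordinary matrix multiplication, via a finite sum (`finsum`). -/
noncomputable def matMul {k : Type*} [CommRing k] (A B : ℕ → ℕ → k) : ℕ → ℕ → k :=
  fun i j => ∑ᶠ l, A i l * B l j

/-- The identity `ℕ × ℕ` matrix. -/
def idM (k : Type*) [CommRing k] : ℕ → ℕ → k :=
  fun i j => if i = j then 1 else 0

/-- Membership in `Mat`: only finitely many non-zero entries. -/
def memMat {k : Type*} [CommRing k] (A : ℕ → ℕ → k) : Prop :=
  {p : ℕ × ℕ | A p.1 p.2 ≠ 0}.Finite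

/-- Transposition of `ℕ × ℕ` matrices. -/
def transposeM {k : Type*} [CommRing k] (A : ℕ → ℕ → k) : ℕ → ℕ → k :=
  fun i j => A j i

/-- The matrix `α`: `α i j = 1` if `θ j = (i, 0)` and `0` otherwise. -/
def alphaM (k : Type*) [CommRing k] (θ : ℕ ≃ ℕ × ℕ) : ℕ → ℕ → k :=
  fun i j => if θ j = (i, 0) then 1 else 0

/-- The matrix `β`: `β i j = 1` if `θ j = θ i + (0, 1)` and `0` otherwise. -/
def betaM (k : Type*) [CommRing k] (θ : ℕ ≃ ℕ × ℕ) : ℕ → ℕ → k :=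
  fun i j => if θ j = ((θ i).1, (θ i).2 + 1) then 1 else 0

section Helpers

variable {k : Type*} [CommRing k]

/-- A matrix with entries `0` and `1` whose nonzero entries in each row, and in each column, are
confined to a single position belongs to `Γ`. -/
lemma memGamma_of_partial_injection (A : ℕ → ℕ → k) (h01 : ∀ i j, A i j = 0 ∨ A i j = 1)
    (r c : ℕ → ℕ) (hr : ∀ i j, A i j ≠ 0 → j = r i) (hc : ∀ i j, A i j ≠ 0 → i = c j) :
    memGamma A := by
  refine ⟨(Set.toFinite ({0, 1} : Set k)).subset ?_, 1, fun i => ⟨{r i}, by simp, ?_⟩,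
    fun j => ⟨{c j}, by simp, ?_⟩⟩
  · rintro _ ⟨p, rfl⟩
    simpa using h01 p.1 p.2
  · intro j h
    simpa using hr i j h
  · intro i h
    simpa using hc i j h

lemma matMul_eq_of_row_single (A B : ℕ → ℕ → k) (i j l : ℕ) (h1 : A i l = 1)
    (h0 : ∀ m, m ≠ l → A i m = 0) : matMul A B i j = B l j := by
  unfold matMul
  rw [finsum_eq_single _ l (fun m hm => by rw [h0 m hm, zero_mul]), h1, one_mul]

lemma matMul_eq_zero_of_row_zero (A B : ℕ → ℕ → k) (i j : ℕ) (h0 : ∀ m, A i m = 0) :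
    matMul A B i j = 0 := by
  simp [matMul, h0]

lemma alphaM_mul (θ : ℕ ≃ ℕ × ℕ) (B : ℕ → ℕ → k) (i j : ℕ) :
    matMul (alphaM k θ) B i j = B (θ.symm (i, 0)) j := by
  apply matMul_eq_of_row_single
  · simp [alphaM]
  · intro m hm
    exact if_neg fun h => hm (by rw [← h, θ.symm_apply_apply])

lemma betaM_mul (θ : ℕ ≃ ℕ × ℕ) (B : ℕ → ℕ → k) (i j : ℕ) :
    matMul (betaM k θ) B i j = B (θ.symm ((θ i).1, (θ i).2 + 1)) j := by
  apply matMul_eq_of_row_single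
  · simp [betaM]
  · intro m hm
    exact if_neg fun h => hm (by rw [← h, θ.symm_apply_apply])

lemma transposeM_alphaM_mul (θ : ℕ ≃ ℕ × ℕ) (B : ℕ → ℕ → k) (i j : ℕ) :
    matMul (transposeM (alphaM k θ)) B i j = if (θ i).2 = 0 then B (θ i).1 j else 0 := by
  split_ifs with h
  · apply matMul_eq_of_row_single
    · have e : θ i = ((θ i).1, 0) := Prod.ext rfl h
      exact if_pos e
    · intro m hm
      exact if_neg fun e => hm (by rw [e])
  · apply matMul_eq_zero_of_row_zero
    intro m
    exact if_neg fun e => h (by rw [e])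

lemma transposeM_betaM_mul (θ : ℕ ≃ ℕ × ℕ) (B : ℕ → ℕ → k) (i j : ℕ) :
    matMul (transposeM (betaM k θ)) B i j =
      if (θ i).2 = 0 then 0 else B (θ.symm ((θ i).1, (θ i).2 - 1)) j := by
  split_ifs with h
  · apply matMul_eq_zero_of_row_zero
    intro m
    exact if_neg fun e => by simp [e] at h
  · apply matMul_eq_of_row_single
    · refine if_pos (Prod.ext ?_ ?_)
      · simp
      · simp only [Equiv.apply_symm_apply]
        omega
    · intro m hm
      exact if_neg fun e => hm (by simp [e])

end Helpers

/-- The matrices `α` and `β` belong to `Γ` and satisfy `β·αᵀ = 0`,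
`α·αᵀ = I`, `β·βᵀ = I` and `αᵀ·α + βᵀ·β = I`. -/
theorem alpha_beta_identities (k : Type*) [CommRing k] (θ : ℕ ≃ ℕ × ℕ) :
    memGamma (alphaM k θ) ∧ memGamma (betaM k θ) ∧
    matMul (betaM k θ) (transposeM (alphaM k θ)) = (fun _ _ => (0 : k)) ∧
    matMul (alphaM k θ) (transposeM (alphaM k θ)) = idM k ∧
    matMul (betaM k θ) (transposeM (betaM k θ)) = idM k ∧
    (fun i j => matMul (transposeM (alphaM k θ)) (alphaM k θ) i j
      + matMul (transposeM (betaM k θ)) (betaM k θ) i j) = idM k := by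
  refine ⟨?_, ?_, ?_, ?_, ?_, ?_⟩
  · refine memGamma_of_partial_injection _ (fun i j => ?_) (fun i => θ.symm (i, 0))
      (fun j => (θ j).1) (fun i j h => ?_) (fun i j h => ?_)
    · unfold alphaM
      split_ifs <;> simp
    · have e : θ j = (i, 0) := by_contra fun e => h (if_neg e)
      simp [← e]
    · have e : θ j = (i, 0) := by_contra fun e => h (if_neg e)
      simp [e]
  · refine memGamma_of_partial_injection _ (fun i j => ?_)
      (fun i => θ.symm ((θ i).1, (θ i).2 + 1)) (fun j => θ.symm ((θ j).1, (θ j).2 - 1))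
      (fun i j h => ?_) (fun i j h => ?_)
    · unfold betaM
      split_ifs <;> simp
    · have e : θ j = ((θ i).1, (θ i).2 + 1) := by_contra fun e => h (if_neg e)
      simp [← e]
    · have e : θ j = ((θ i).1, (θ i).2 + 1) := by_contra fun e => h (if_neg e)
      simp [e]
  · funext i j
    rw [betaM_mul]
    simp [transposeM, alphaM]
  · funext i j
    rw [alphaM_mul]
    simp [transposeM, alphaM, idM]
  · funext i j
    rw [betaM_mul]
    have e : ((θ i).1 = (θ j).1 ∧ (θ i).2 = (θ j).2) ↔ i = j := by
      rw [← Prod.ext_iff, θ.apply_eq_iff_eq]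
    simp [transposeM, betaM, idM, e]
  · funext i j
    rw [transposeM_alphaM_mul, transposeM_betaM_mul]
    have e : θ j = θ i ↔ i = j := by
      rw [θ.apply_eq_iff_eq, eq_comm]
    by_cases h : (θ i).2 = 0
    · have h' : ((θ i).1, 0) = θ i := Prod.ext rfl h.symm
      simp [h, alphaM, idM, h', e]
    · have h' : ((θ i).1, (θ i).2 - 1 + 1) = θ i := Prod.ext rfl (by simp only; omega)
      simp only [h, if_false, zero_add, betaM, idM, Equiv.apply_symm_apply, h', e]
end

section
/- For every A ∈ Γ the intertwining identities A·α = α·φ(A) and φ(A)·β = β·φ(A) hold in Γ. -/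
/-- The endomorphism `φ` of `Γ` attached to a bijection `θ : ℕ ≅ ℕ × ℕ`:
`φ(A) i j = A (θ₁ i) (θ₁ j)` if `θ₂ i = θ₂ j`, and `0` otherwise. -/
def phiM {k : Type*} [CommRing k] (θ : ℕ ≃ ℕ × ℕ) (A : ℕ → ℕ → k) : ℕ → ℕ → k :=
  fun i j => if (θ i).2 = (θ j).2 then A (θ i).1 (θ j).1 else 0

/-- For every `A ∈ Γ` one has `A·α = α·φ(A)` and `φ(A)·β = β·φ(A)`. -/
theorem alpha_beta_intertwine_phi (k : Type*) [CommRing k] (θ : ℕ ≃ ℕ × ℕ)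
    (A : ℕ → ℕ → k) (hA : memGamma A) :
    matMul A (alphaM k θ) = matMul (alphaM k θ) (phiM θ A) ∧
    matMul (phiM θ A) (betaM k θ) = matMul (betaM k θ) (phiM θ A) := by
  constructor
  · funext i j
    have h1 : matMul A (alphaM k θ) i j = A i (θ j).1 * alphaM k θ (θ j).1 j := by
      refine finsum_eq_single _ _ fun l hl => ?_
      have : θ j ≠ (l, 0) := fun h => hl (by rw [h])
      simp [alphaM, this]
    have h2 : matMul (alphaM k θ) (phiM θ A) i j =
        alphaM k θ i (θ.symm (i, 0)) * phiM θ A (θ.symm (i, 0)) j := by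
      refine finsum_eq_single _ _ fun l hl => ?_
      have : θ l ≠ (i, 0) := fun h => hl (by rw [← h, θ.symm_apply_apply])
      simp [alphaM, this]
    rw [h1, h2]
    simp [alphaM, phiM, Prod.ext_iff, eq_comm]
  · funext i j
    -- If `(θ j).2 = 0` the truncated subtraction is harmless: column `j` of `β` vanishes.
    have h1 : matMul (phiM θ A) (betaM k θ) i j =
        phiM θ A i (θ.symm ((θ j).1, (θ j).2 - 1)) *
          betaM k θ (θ.symm ((θ j).1, (θ j).2 - 1)) j := by
      refine finsum_eq_single _ _ fun l hl => ?_
      have : θ j ≠ ((θ l).1, (θ l).2 + 1) := fun h => hl (by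
        simp [h])
      simp [betaM, this]
    have h2 : matMul (betaM k θ) (phiM θ A) i j =
        betaM k θ i (θ.symm ((θ i).1, (θ i).2 + 1)) *
          phiM θ A (θ.symm ((θ i).1, (θ i).2 + 1)) j := by
      refine finsum_eq_single _ _ fun l hl => ?_
      have : θ l ≠ ((θ i).1, (θ i).2 + 1) := fun h => hl (by rw [← h, θ.symm_apply_apply])
      simp [betaM, this]
    rw [h1, h2]
    simp only [betaM, phiM, Equiv.apply_symm_apply, Prod.ext_iff]
    rcases (θ j).2 with _ | m <;> simp
end

section
/- The map f: Γ ⊕ W → W, (A, B) ↦ A·α + B·β, is an isomorphism of Γ-Γ-bimodules: f is bijective with inverse B ↦ (B·αᵀ, B·βᵀ); f is a homomorphism of left Γ-modules, i.e. f(C·A, C·B) = C·f(A, B) for all C ∈ Γ; and f is a homomorphism of right Γ-modules for the stated right actions, i.e. (A·C)·α + (B·φ(C))·β = (A·α + B·β)·φ(C) for all A, B, C ∈ Γ. -/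
/-- The map `f : Γ ⊕ W → W`, `(A, B) ↦ A·α + B·β`. -/
noncomputable def fMap {k : Type*} [CommRing k] (θ : ℕ ≃ ℕ × ℕ) (A B : ℕ → ℕ → k) :
    ℕ → ℕ → k :=
  fun i j => matMul A (alphaM k θ) i j + matMul B (betaM k θ) i j

/-- The injection `m ↦ θ⁻¹(m, 0)`, which indexes the columns of `A·α + B·β` that come from `A`. -/
def colZero (θ : ℕ ≃ ℕ × ℕ) (m : ℕ) : ℕ := θ.symm (m, 0)

/-- The injection `m ↦ θ⁻¹(θ m + (0, 1))`, which indexes the columns of `A·α + B·β` that come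
from `B`. -/
def colSucc (θ : ℕ ≃ ℕ × ℕ) (m : ℕ) : ℕ := θ.symm ((θ m).1, (θ m).2 + 1)

theorem colZero_injective (θ : ℕ ≃ ℕ × ℕ) : Function.Injective (colZero θ) := by
  intro a b h
  simpa [colZero] using h

theorem colSucc_injective (θ : ℕ ≃ ℕ × ℕ) : Function.Injective (colSucc θ) := by
  intro a b h
  have h' : (θ a).1 = (θ b).1 ∧ (θ a).2 = (θ b).2 := by simpa [colSucc] using h
  exact θ.injective (Prod.ext h'.1 h'.2)

theorem eq_colZero {θ : ℕ ≃ ℕ × ℕ} {j : ℕ} (h : (θ j).2 = 0) : j = colZero θ (θ j).1 := by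
  rw [colZero, ← h, Prod.mk.eta, Equiv.symm_apply_apply]

theorem eq_colSucc {θ : ℕ ≃ ℕ × ℕ} {j n : ℕ} (h : (θ j).2 = n + 1) :
    j = colSucc θ (θ.symm ((θ j).1, n)) := by
  simp [colSucc, ← h]

/-- The images of `colZero` and `colSucc` cover `ℕ`. -/
theorem col_cases (θ : ℕ ≃ ℕ × ℕ) (j : ℕ) :
    (∃ m, j = colZero θ m) ∨ ∃ m, j = colSucc θ m := by
  rcases h : (θ j).2 with _ | n
  · exact Or.inl ⟨_, eq_colZero h⟩
  · exact Or.inr ⟨_, eq_colSucc h⟩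

/-- Two matrices agree as soon as their columns indexed by `colZero` and by `colSucc` do. -/
theorem ext_col {R : Type*} (θ : ℕ ≃ ℕ × ℕ) {M N : ℕ → ℕ → R}
    (h0 : ∀ i m, M i (colZero θ m) = N i (colZero θ m))
    (h1 : ∀ i m, M i (colSucc θ m) = N i (colSucc θ m)) : M = N := by
  funext i j
  rcases col_cases θ j with ⟨m, rfl⟩ | ⟨m, rfl⟩
  · exact h0 i m
  · exact h1 i m

section

variable {k : Type*} [CommRing k]

theorem alphaM_apply (θ : ℕ ≃ ℕ × ℕ) (i j : ℕ) :
    alphaM k θ i j = if j = colZero θ i then 1 else 0 := by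
  simp only [alphaM, colZero, Equiv.eq_symm_apply]

theorem betaM_apply (θ : ℕ ≃ ℕ × ℕ) (i j : ℕ) :
    betaM k θ i j = if j = colSucc θ i then 1 else 0 := by
  simp only [betaM, colSucc, Equiv.eq_symm_apply]

/-- A sum whose only possibly non-zero term is the one at `a`, with coefficient `1`. -/
theorem finsum_mul_ite (u : ℕ → k) (p : ℕ → Prop) [DecidablePred p] (a : ℕ)
    (hp : ∀ l, p l ↔ l = a) : ∑ᶠ l, u l * (if p l then 1 else 0) = u a := by
  rw [finsum_eq_single _ a]
  · simp [hp]
  · intro l hl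
    simp [hp, hl]

theorem matMul_alphaT (θ : ℕ ≃ ℕ × ℕ) (B : ℕ → ℕ → k) :
    matMul B (transposeM (alphaM k θ)) = fun i j => B i (colZero θ j) := by
  funext i j
  simp only [matMul, transposeM, alphaM_apply]
  exact finsum_mul_ite _ _ _ fun _ => Iff.rfl

theorem matMul_betaT (θ : ℕ ≃ ℕ × ℕ) (B : ℕ → ℕ → k) :
    matMul B (transposeM (betaM k θ)) = fun i j => B i (colSucc θ j) := by
  funext i j
  simp only [matMul, transposeM, betaM_apply]
  exact finsum_mul_ite _ _ _ fun _ => Iff.rfl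

theorem colZero_ne_colSucc (θ : ℕ ≃ ℕ × ℕ) (m l : ℕ) : colZero θ m ≠ colSucc θ l := by
  simp [colZero, colSucc]

theorem fMap_colZero (θ : ℕ ≃ ℕ × ℕ) (A B : ℕ → ℕ → k) (i m : ℕ) :
    fMap θ A B i (colZero θ m) = A i m := by
  simp only [fMap, matMul, alphaM_apply, betaM_apply, colZero_ne_colSucc, if_false, mul_zero,
    finsum_zero, add_zero]
  exact finsum_mul_ite _ _ _ fun l => by rw [(colZero_injective θ).eq_iff, eq_comm]

theorem fMap_colSucc (θ : ℕ ≃ ℕ × ℕ) (A B : ℕ → ℕ → k) (i m : ℕ) :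
    fMap θ A B i (colSucc θ m) = B i m := by
  simp only [fMap, matMul, alphaM_apply, betaM_apply, (colZero_ne_colSucc θ _ _).symm, if_false,
    mul_zero, finsum_zero, zero_add]
  exact finsum_mul_ite _ _ _ fun l => by rw [(colSucc_injective θ).eq_iff, eq_comm]

/-- A sum supported on the image of an injection reindexes along it; no finiteness of the support
is needed, since both sides are `0` when it fails. -/
theorem finsum_eq_finsum_comp {e : ℕ → ℕ} (he : Function.Injective e) (u : ℕ → k)
    (hu : ∀ l, u l ≠ 0 → ∃ m, l = e m) : ∑ᶠ l, u l = ∑ᶠ m, u (e m) := by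
  rw [← finsum_mem_range he, ← finsum_mem_univ]
  refine finsum_mem_inter_support_eq _ _ _ ?_
  ext l
  simp only [Set.mem_inter_iff, Set.mem_univ, true_and, Function.mem_support, Set.mem_range]
  refine ⟨fun h => ⟨?_, h⟩, fun h => h.2⟩
  obtain ⟨m, hm⟩ := hu l h
  exact ⟨m, hm.symm⟩

theorem phiM_colZero_colZero (θ : ℕ ≃ ℕ × ℕ) (C : ℕ → ℕ → k) (l m : ℕ) :
    phiM θ C (colZero θ l) (colZero θ m) = C l m := by
  simp [phiM, colZero]

theorem phiM_colSucc_colSucc (θ : ℕ ≃ ℕ × ℕ) (C : ℕ → ℕ → k) (l m : ℕ) :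
    phiM θ C (colSucc θ l) (colSucc θ m) = phiM θ C l m := by
  simp [phiM, colSucc]

theorem phiM_colSucc_colZero (θ : ℕ ≃ ℕ × ℕ) (C : ℕ → ℕ → k) (l m : ℕ) :
    phiM θ C (colSucc θ l) (colZero θ m) = 0 := by
  simp [phiM, colSucc, colZero]

theorem phiM_colZero_colSucc (θ : ℕ ≃ ℕ × ℕ) (C : ℕ → ℕ → k) (l m : ℕ) :
    phiM θ C (colZero θ l) (colSucc θ m) = 0 := by
  simp [phiM, colSucc, colZero]

/-- Selecting columns along an injection preserves membership in `Γ`. -/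
theorem memGamma_comp {e : ℕ → ℕ} (he : Function.Injective e) {B : ℕ → ℕ → k}
    (hB : memGamma B) : memGamma fun i j => B i (e j) := by
  obtain ⟨hfin, n, hrow, hcol⟩ := hB
  refine ⟨hfin.subset ?_, n, fun i => ?_, fun j => hcol (e j)⟩
  · rintro _ ⟨p, rfl⟩
    exact ⟨(p.1, e p.2), rfl⟩
  · obtain ⟨s, hs, hs'⟩ := hrow i
    refine ⟨s.preimage e he.injOn, ?_, fun j hj => Finset.mem_preimage.2 (hs' _ hj)⟩
    refine le_trans ?_ hs
    exact Finset.card_le_card_of_injOn e (fun x hx => Finset.mem_preimage.1 hx) he.injOn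

theorem memGamma_fMap (θ : ℕ ≃ ℕ × ℕ) {A B : ℕ → ℕ → k} (hA : memGamma A) (hB : memGamma B) :
    memGamma (fMap θ A B) := by
  obtain ⟨hAfin, a, hArow, hAcol⟩ := hA
  obtain ⟨hBfin, b, hBrow, hBcol⟩ := hB
  refine ⟨(hAfin.union hBfin).subset ?_, a + b, fun i => ?_, fun j => ?_⟩
  · rintro _ ⟨⟨i, j⟩, rfl⟩
    rcases col_cases θ j with ⟨m, rfl⟩ | ⟨m, rfl⟩
    · exact Or.inl ⟨(i, m), (fMap_colZero θ A B i m).symm⟩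
    · exact Or.inr ⟨(i, m), (fMap_colSucc θ A B i m).symm⟩
  · obtain ⟨s, hs, hs'⟩ := hArow i
    obtain ⟨t, ht, ht'⟩ := hBrow i
    refine ⟨s.image (colZero θ) ∪ t.image (colSucc θ), ?_, fun j hj => ?_⟩
    · exact (Finset.card_union_le _ _).trans
        (add_le_add (Finset.card_image_le.trans hs) (Finset.card_image_le.trans ht))
    · rcases col_cases θ j with ⟨m, rfl⟩ | ⟨m, rfl⟩
      · rw [fMap_colZero] at hj
        exact Finset.mem_union_left _ (Finset.mem_image_of_mem _ (hs' m hj))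
      · rw [fMap_colSucc] at hj
        exact Finset.mem_union_right _ (Finset.mem_image_of_mem _ (ht' m hj))
  · rcases col_cases θ j with ⟨m, rfl⟩ | ⟨m, rfl⟩
    · obtain ⟨s, hs, hs'⟩ := hAcol m
      exact ⟨s, by omega, fun i hi => hs' i (by rwa [fMap_colZero] at hi)⟩
    · obtain ⟨s, hs, hs'⟩ := hBcol m
      exact ⟨s, by omega, fun i hi => hs' i (by rwa [fMap_colSucc] at hi)⟩

theorem fMap_matMul_right (θ : ℕ ≃ ℕ × ℕ) (A B C : ℕ → ℕ → k) :
    fMap θ (matMul A C) (matMul B (phiM θ C)) = matMul (fMap θ A B) (phiM θ C) := by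
  refine ext_col θ (fun i m => ?_) (fun i m => ?_)
  · rw [fMap_colZero]
    unfold matMul
    rw [finsum_eq_finsum_comp (colZero_injective θ)
      (fun l => fMap θ A B i l * phiM θ C l (colZero θ m))]
    · simp only [fMap_colZero, phiM_colZero_colZero]
    · intro l hl
      rcases col_cases θ l with h | ⟨m', rfl⟩
      · exact h
      · exact absurd (by rw [phiM_colSucc_colZero, mul_zero]) hl
  · rw [fMap_colSucc]
    unfold matMul
    rw [finsum_eq_finsum_comp (colSucc_injective θ)
      (fun l => fMap θ A B i l * phiM θ C l (colSucc θ m))]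
    · simp only [fMap_colSucc, phiM_colSucc_colSucc]
    · intro l hl
      rcases col_cases θ l with ⟨m', rfl⟩ | h
      · exact absurd (by rw [phiM_colZero_colSucc, mul_zero]) hl
      · exact h

end

/-- The map `f : Γ ⊕ W → W`, `(A, B) ↦ A·α + B·β`, is an isomorphism of
`Γ`-`Γ`-bimodules, where `W` is `Γ` as a left `Γ`-module with right action `B · C = B·φ(C)`:
it takes values in `Γ`, is additive and `k`-linear, commutes with the left and right
`Γ`-actions, and is bijective with inverse `B ↦ (B·αᵀ, B·βᵀ)`. -/
theorem gamma_plus_W_isomorphic_to_W (k : Type*) [CommRing k] (θ : ℕ ≃ ℕ × ℕ) :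
    -- f lands in W = Γ
    (∀ A B : ℕ → ℕ → k, memGamma A → memGamma B → memGamma (fMap θ A B)) ∧
    -- f is additive and k-linear
    (∀ A A' B B' : ℕ → ℕ → k, memGamma A → memGamma A' → memGamma B → memGamma B' →
      fMap θ (fun i j => A i j + A' i j) (fun i j => B i j + B' i j) =
        fun i j => fMap θ A B i j + fMap θ A' B' i j) ∧
    (∀ (c : k) (A B : ℕ → ℕ → k), memGamma A → memGamma B →
      fMap θ (fun i j => c * A i j) (fun i j => c * B i j) =
        fun i j => c * fMap θ A B i j) ∧
    -- f is a homomorphism of left Γ-modules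
    (∀ C A B : ℕ → ℕ → k, memGamma C → memGamma A → memGamma B →
      fMap θ (matMul C A) (matMul C B) = matMul C (fMap θ A B)) ∧
    -- f is a homomorphism of right Γ-modules for the stated right actions
    (∀ A B C : ℕ → ℕ → k, memGamma A → memGamma B → memGamma C →
      fMap θ (matMul A C) (matMul B (phiM θ C)) = matMul (fMap θ A B) (phiM θ C)) ∧
    -- the candidate inverse g : W → Γ ⊕ W, B ↦ (B·αᵀ, B·βᵀ), lands in Γ ⊕ Γ
    (∀ B : ℕ → ℕ → k, memGamma B →
      memGamma (matMul B (transposeM (alphaM k θ))) ∧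
      memGamma (matMul B (transposeM (betaM k θ)))) ∧
    -- g ∘ f = id
    (∀ A B : ℕ → ℕ → k, memGamma A → memGamma B →
      matMul (fMap θ A B) (transposeM (alphaM k θ)) = A ∧
      matMul (fMap θ A B) (transposeM (betaM k θ)) = B) ∧
    -- f ∘ g = id
    (∀ B : ℕ → ℕ → k, memGamma B →
      fMap θ (matMul B (transposeM (alphaM k θ))) (matMul B (transposeM (betaM k θ))) = B) := by
  refine ⟨fun A B hA hB => memGamma_fMap θ hA hB, ?_, ?_, ?_,
    fun A B C _ _ _ => fMap_matMul_right θ A B C, ?_, ?_, ?_⟩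
  · intro A A' B B' _ _ _ _
    refine ext_col θ (fun i m => ?_) (fun i m => ?_)
    · simp only [fMap_colZero]
    · simp only [fMap_colSucc]
  · intro c A B _ _
    refine ext_col θ (fun i m => ?_) (fun i m => ?_)
    · simp only [fMap_colZero]
    · simp only [fMap_colSucc]
  · intro C A B _ _ _
    refine ext_col θ (fun i m => ?_) (fun i m => ?_)
    · simp only [fMap_colZero, matMul]
    · simp only [fMap_colSucc, matMul]
  · intro B hB
    rw [matMul_alphaT, matMul_betaT]
    exact ⟨memGamma_comp (colZero_injective θ) hB, memGamma_comp (colSucc_injective θ) hB⟩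
  · intro A B _ _
    rw [matMul_alphaT, matMul_betaT]
    simp only [fMap_colZero, fMap_colSucc, and_self]
  · intro B _
    rw [matMul_alphaT, matMul_betaT]
    refine ext_col θ (fun i m => ?_) (fun i m => ?_)
    · simp only [fMap_colZero]
    · simp only [fMap_colSucc]
end

section
/- The set S = {Ī_n : n ≥ 0} satisfies the left Ore condition in Γ: for every n ≥ 0 and every E ∈ Γ there exist m ≥ 0 and E' ∈ Γ such that E'·Ī_n = Ī_m·E. -/
/-- The matrix `Ī_n = I - I_n`, having `1` on the diagonal places past the first `n` ones and
`0` elsewhere. (The paper indexes matrices by `{1, 2, ...}` and puts `(Ī_n) i j = 1` iff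
`i = j > n`; with `ℕ = {0, 1, ...}` this reads `i = j ≥ n`, so that `Ī_0 = I`.) -/
def IbarM (k : Type*) [CommRing k] (n : ℕ) : ℕ → ℕ → k :=
  fun i j => if i = j ∧ n ≤ i then 1 else 0

theorem matMul_IbarM {k : Type*} [CommRing k] (A : ℕ → ℕ → k) (n i j : ℕ) :
    matMul A (IbarM k n) i j = if n ≤ j then A i j else 0 := by
  unfold matMul IbarM
  rw [finsum_eq_single _ j (fun l hl => by simp [hl])]
  simp

theorem IbarM_matMul {k : Type*} [CommRing k] (A : ℕ → ℕ → k) (m i j : ℕ) :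
    matMul (IbarM k m) A i j = if m ≤ i then A i j else 0 := by
  unfold matMul IbarM
  rw [finsum_eq_single _ i (fun l hl => by simp [hl.symm])]
  simp

theorem memGamma_eraseRows {k : Type*} [CommRing k] {A : ℕ → ℕ → k} (hA : memGamma A) (m : ℕ) :
    memGamma (fun i j => if m ≤ i then A i j else 0) := by
  obtain ⟨hfin, N, hrow, hcol⟩ := hA
  refine ⟨(hfin.insert 0).subset ?_, N, fun i => ?_, fun j => ?_⟩
  · rintro _ ⟨p, rfl⟩
    dsimp only
    split_ifs
    · exact Or.inr ⟨p, rfl⟩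
    · exact Or.inl rfl
  · obtain ⟨s, hs, h⟩ := hrow i
    exact ⟨s, hs, fun j hj => h j (ite_ne_right_iff.mp hj).2⟩
  · obtain ⟨s, hs, h⟩ := hcol j
    exact ⟨s, hs, fun i hi => h i (ite_ne_right_iff.mp hi).2⟩

theorem exists_rows_vanish {k : Type*} [CommRing k] {A : ℕ → ℕ → k} (hA : memGamma A) (n : ℕ) :
    ∃ m, ∀ i j, m ≤ i → j < n → A i j = 0 := by
  obtain ⟨-, N, -, hcol⟩ := hA
  choose s _ hs using hcol
  refine ⟨((Finset.range n).biUnion s).sup id + 1, fun i j hi hj => ?_⟩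
  by_contra h
  have hmem : i ∈ (Finset.range n).biUnion s :=
    Finset.mem_biUnion.mpr ⟨j, Finset.mem_range.mpr hj, hs j i h⟩
  have hle : i ≤ ((Finset.range n).biUnion s).sup id := Finset.le_sup (f := id) hmem
  omega

/-- The set `S = {Ī_n : n ≥ 0}` satisfies the left Ore condition in `Γ`:
for every `n` and every `E ∈ Γ` there are `m` and `E' ∈ Γ` with `E'·Ī_n = Ī_m·E`. -/
theorem Ibar_left_ore_condition (k : Type*) [CommRing k] (n : ℕ)
    (E : ℕ → ℕ → k) (hE : memGamma E) :
    ∃ (m : ℕ) (E' : ℕ → ℕ → k), memGamma E' ∧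
      matMul E' (IbarM k n) = matMul (IbarM k m) E := by
  obtain ⟨m, hm⟩ := exists_rows_vanish hE n
  refine ⟨m, _, memGamma_eraseRows hE m, ?_⟩
  funext i j
  rw [matMul_IbarM, IbarM_matMul]
  by_cases hj : n ≤ j
  · simp [hj]
  · by_cases hi : m ≤ i
    · simp [hj, hm i j hi (not_le.mp hj)]
    · simp [hi]
end
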